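/- arXiv:2307.01156 — 6 statements merged into one kernel-verified Lean document; each statement's English description precedes it below -/
import Mathlib

section
/- Let (X,T) be a zero dimensional dynamical system, let W ⊆ X be a quasi-section, and let U be a clopen set with W ⊆ U. Then every point x ∈ U is recurrent to U, i.e., there exists an integer n ≥ 1 such that Tⁿ(x) ∈ U. -/
/-- A clopen set `U` is a *complete `T`-section* if `⋃_{n ∈ ℤ} Tⁿ(U) = X`. -/
def IsCompleteSection {X : Type*} [TopologicalSpace X] (T : X ≃ₜ X) (U : Set X) : Prop :=
  (⋃ n : ℤ, ⇑(T.toEquiv ^ n) '' U) = Set.univ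

/-- A closed set `W ⊆ X` is a *quasi-section* if every clopen set `U ⊇ W` is a
complete `T`-section. -/
def IsQuasiSection {X : Type*} [TopologicalSpace X] (T : X ≃ₜ X) (W : Set X) : Prop :=
  IsClosed W ∧ ∀ U : Set X, IsClopen U → W ⊆ U → IsCompleteSection T U

theorem continuous_toEquiv_pow {X : Type*} [TopologicalSpace X] (T : X ≃ₜ X) (n : ℕ) :
    Continuous ⇑(T.toEquiv ^ n) := by
  rw [Equiv.Perm.coe_pow]
  exact T.continuous.iterate n

theorem continuous_toEquiv_zpow {X : Type*} [TopologicalSpace X] (T : X ≃ₜ X) (n : ℤ) :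
    Continuous ⇑(T.toEquiv ^ n) := by
  obtain ⟨k, rfl | rfl⟩ := n.eq_nat_or_neg
  · rw [zpow_natCast]
    exact continuous_toEquiv_pow T k
  · rw [zpow_neg, zpow_natCast, ← inv_pow]
    exact continuous_toEquiv_pow T.symm k

/-- If `W` is a quasi-section for a zero dimensional dynamical system `(X,T)` and `U` is a
clopen set with `W ⊆ U`, then every point of `U` is recurrent to `U`: there exists `n ≥ 1`
with `Tⁿ(x) ∈ U`. -/
theorem stmt1 {X : Type*} [TopologicalSpace X] [CompactSpace X]
    [TopologicalSpace.MetrizableSpace X] [TotallyDisconnectedSpace X] [Nonempty X]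
    (T : X ≃ₜ X) (W : Set X) (hW : IsQuasiSection T W)
    (U : Set X) (hU : IsClopen U) (hWU : W ⊆ U) :
    ∀ x ∈ U, ∃ n : ℕ, 1 ≤ n ∧ (T.toEquiv ^ n) x ∈ U := by
  intro x _
  have hc : (⋃ n : ℤ, ⇑(T.toEquiv ^ n) '' U) = Set.univ := hW.2 U hU hWU
  have ho : ∀ n : ℤ, IsOpen (⇑(T.toEquiv ^ n) '' U) := by
    intro n
    rw [Equiv.image_eq_preimage_symm]
    have h := hU.isOpen.preimage (continuous_toEquiv_zpow T (-n))
    rw [zpow_neg] at h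
    exact h
  obtain ⟨t, ht⟩ := isCompact_univ.elim_finite_subcover _ ho hc.ge
  obtain ⟨M, hM⟩ := t.bddAbove
  set N : ℕ := M.toNat + 1 with hN
  have hx := ht (Set.mem_univ ((T.toEquiv ^ N) x))
  simp only [Set.mem_iUnion] at hx
  obtain ⟨n, hn, u, hu, hux⟩ := hx
  have hnM : n ≤ M := hM hn
  refine ⟨((N : ℤ) - n).toNat, by omega, ?_⟩
  have e : T.toEquiv ^ ((N : ℤ) - n).toNat = (T.toEquiv ^ n)⁻¹ * T.toEquiv ^ N := by
    rw [← zpow_natCast, Int.toNat_of_nonneg (by omega), ← zpow_natCast, ← zpow_neg, ← zpow_add]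
    congr 1
    ring
  rw [e, Equiv.Perm.mul_apply, ← hux, ← Equiv.Perm.mul_apply, inv_mul_cancel]
  exact hu
end

section
/- Let (X,T) be a zero dimensional dynamical system, let A ⊆ X be a nonempty clopen set which is a complete T-section, and let P be a finite partition of X into clopen sets. Then there exists a Kakutani–Rokhlin partition Q for (X,T) such that the top of Q equals A and Q refines P, i.e., every element of Q is contained in some element of P. -/
/-- A Kakutani–Rokhlin partition for `(X,T)`: a finite family
`{Z(k,j) : 1 ≤ k ≤ K, 1 ≤ j ≤ J(k)}` of pairwise disjoint clopen sets covering `X`, with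
`T(Z(k,j)) = Z(k,j+1)` for `1 ≤ j < J(k)` and `T` mapping the top onto the base. -/
structure KRPartition (X : Type*) [TopologicalSpace X] (T : X ≃ₜ X) where
  K : ℕ
  K_pos : 1 ≤ K
  J : ℕ → ℕ
  J_pos : ∀ k ∈ Set.Icc 1 K, 1 ≤ J k
  Z : ℕ → ℕ → Set X
  clopen : ∀ k ∈ Set.Icc 1 K, ∀ j ∈ Set.Icc 1 (J k), IsClopen (Z k j)
  disj : ∀ k ∈ Set.Icc 1 K, ∀ j ∈ Set.Icc 1 (J k), ∀ k' ∈ Set.Icc 1 K,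
    ∀ j' ∈ Set.Icc 1 (J k'), (k, j) ≠ (k', j') → Disjoint (Z k j) (Z k' j')
  cover : (⋃ k ∈ Set.Icc 1 K, ⋃ j ∈ Set.Icc 1 (J k), Z k j) = Set.univ
  tower : ∀ k ∈ Set.Icc 1 K, ∀ j, 1 ≤ j → j < J k → ⇑T '' Z k j = Z k (j + 1)
  top_to_base : ⇑T '' (⋃ k ∈ Set.Icc 1 K, Z k (J k)) = ⋃ k ∈ Set.Icc 1 K, Z k 1

/-- The top `⋃_{k=1}^{K} Z(k,J(k))` of a K-R partition. -/
def KRPartition.top {X : Type*} [TopologicalSpace X] {T : X ≃ₜ X}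
    (P : KRPartition X T) : Set X :=
  ⋃ k ∈ Set.Icc 1 P.K, P.Z k (P.J k)

/-- The collection of elements (clopen pieces) of a K-R partition. -/
def KRPartition.parts {X : Type*} [TopologicalSpace X] {T : X ≃ₜ X}
    (P : KRPartition X T) : Set (Set X) :=
  {S | ∃ k ∈ Set.Icc 1 P.K, ∃ j ∈ Set.Icc 1 (P.J k), S = P.Z k j}

theorem kr_cancel {X : Type*} [TopologicalSpace X] (T : X ≃ₜ X) (m n : ℕ) (x : X) :
    (⇑T.symm)^[m] ((⇑T)^[m + n] x) = (⇑T)^[n] x := by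
  rw [Function.iterate_add_apply]
  exact (Function.LeftInverse.iterate T.symm_apply_apply m) _

theorem kr_bound {X : Type*} [TopologicalSpace X] [CompactSpace X]
    (T : X ≃ₜ X) (A : Set X) (hA : IsClopen A) (hAsec : IsCompleteSection T A) :
    ∃ M : ℕ, ∀ x, ∃ m ≤ M, (⇑T)^[m] x ∈ A ∨ (⇑T.symm)^[m] x ∈ A := by
  have hopen : ∀ m : ℕ, IsOpen ((⇑T)^[m] ⁻¹' A ∪ (⇑T.symm)^[m] ⁻¹' A) := fun m =>
    (hA.isOpen.preimage (T.continuous.iterate m)).union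
      (hA.isOpen.preimage (T.symm.continuous.iterate m))
  have hcov : Set.univ ⊆ ⋃ m : ℕ, ((⇑T)^[m] ⁻¹' A ∪ (⇑T.symm)^[m] ⁻¹' A) := by
    intro x _
    have hx : x ∈ (⋃ n : ℤ, ⇑(T.toEquiv ^ n) '' A) := by
      rw [show (⋃ n : ℤ, ⇑(T.toEquiv ^ n) '' A) = Set.univ from hAsec]; trivial
    obtain ⟨n, a, ha, hax⟩ := Set.mem_iUnion.1 hx
    rw [Set.mem_iUnion]
    cases n with
    | ofNat m =>
      refine ⟨m, Or.inr ?_⟩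
      have h : (⇑T)^[m] a = x := by
        rw [← hax]
        simp only [Int.ofNat_eq_natCast, zpow_natCast, Equiv.Perm.coe_pow]
        rfl
      have := kr_cancel T m 0 a
      simp only [add_zero, h, Function.iterate_zero, id] at this
      simpa [this] using ha
    | negSucc m =>
      refine ⟨m + 1, Or.inl ?_⟩
      rw [zpow_negSucc] at hax
      have h : (T.toEquiv ^ (m + 1)) x = a := by
        rw [← hax]; exact Equiv.apply_symm_apply _ _
      have h' : (⇑T)^[m + 1] x = a := by
        rw [← h, Equiv.Perm.coe_pow]; rfl
      show (⇑T)^[m + 1] x ∈ A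
      rw [h']; exact ha
  obtain ⟨t, ht⟩ := isCompact_univ.elim_finite_subcover _ hopen hcov
  refine ⟨t.sup id, fun x => ?_⟩
  obtain ⟨m, hm, hx⟩ := Set.mem_iUnion₂.1 (ht (Set.mem_univ x))
  exact ⟨m, Finset.le_sup (f := id) hm, hx⟩

theorem kr_fwd {X : Type*} [TopologicalSpace X] [CompactSpace X]
    (T : X ≃ₜ X) (A : Set X) (hA : IsClopen A) (hAsec : IsCompleteSection T A) :
    ∃ M : ℕ, ∀ x, ∃ r ≤ M, (⇑T)^[r] x ∈ A ∧ ∀ i < r, (⇑T)^[i] x ∉ A := by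
  classical
  obtain ⟨M, hM⟩ := kr_bound T A hA hAsec
  refine ⟨M + M, fun x => ?_⟩
  have : ∃ r ≤ M + M, (⇑T)^[r] x ∈ A := by
    obtain ⟨m, hm, h | h⟩ := hM ((⇑T)^[M] x)
    · exact ⟨m + M, by omega, by rwa [Function.iterate_add_apply]⟩
    · refine ⟨M - m, by omega, ?_⟩
      rw [← kr_cancel T m (M - m) x, Nat.add_sub_cancel' hm]; exact h
  obtain ⟨r, hr, hrA⟩ := this
  have hex : ∃ r, (⇑T)^[r] x ∈ A := ⟨r, hrA⟩
  exact ⟨Nat.find hex, (Nat.find_min' hex hrA).trans hr, Nat.find_spec hex,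
    fun i hi => Nat.find_min hex hi⟩

theorem kr_bwd {X : Type*} [TopologicalSpace X] [CompactSpace X]
    (T : X ≃ₜ X) (A : Set X) (hA : IsClopen A) (hAsec : IsCompleteSection T A) (y : X) :
    ∃ s : ℕ, ∃ a ∈ A, (⇑T)^[s + 1] a = y ∧ ∀ i < s, (⇑T.symm)^[i + 1] y ∉ A := by
  classical
  obtain ⟨M, hM⟩ := kr_bound T A hA hAsec
  have hex : ∃ s, (⇑T.symm)^[s + 1] y ∈ A := by
    obtain ⟨m, hm, h | h⟩ := hM ((⇑T.symm)^[M + 1] y)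
    · refine ⟨M - m, ?_⟩
      have := kr_cancel T.symm m (M - m + 1) y
      rw [← this, ← add_assoc, Nat.add_sub_cancel' hm]; exact h
    · exact ⟨m + M, by rwa [add_assoc, Function.iterate_add_apply]⟩
  refine ⟨Nat.find hex, _, Nat.find_spec hex, ?_, fun i hi => Nat.find_min hex hi⟩
  exact kr_cancel T.symm (Nat.find hex + 1) 0 y

/-- A locally constant labelling of the points by `1, …, K`, recording the first `M` steps. -/
theorem kr_name {X : Type*} [TopologicalSpace X]
    (T : X ≃ₜ X) (A : Set X) (hA : IsClopen A) (M : ℕ)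
    (P : Finset (Set X)) (hPclopen : ∀ S ∈ P, IsClopen S)
    (c : X → P) (hc : ∀ x, ∀ S : P, c x = S ↔ x ∈ S.1) [Nonempty X] :
    ∃ (K : ℕ) (F : X → ℕ), 1 ≤ K ∧ (∀ x, F x ∈ Set.Icc 1 K) ∧ (∀ k, IsClopen (F ⁻¹' {k})) ∧
      ∀ x y, F x = F y → ∀ i ≤ M, ((⇑T)^[i] x ∈ A ↔ (⇑T)^[i] y ∈ A) ∧
        c ((⇑T)^[i] x) = c ((⇑T)^[i] y) := by
  classical
  let ι := Fin (M + 1) → Bool × P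
  let G : X → ι := fun x i => (decide ((⇑T)^[i] x ∈ A), c ((⇑T)^[i] x))
  let e := Fintype.equivFin ι
  have hG : ∀ g : ι, IsClopen (G ⁻¹' {g}) := by
    intro g
    have : G ⁻¹' {g} = ⋂ i : Fin (M + 1), (⇑T)^[i] ⁻¹'
        ((if (g i).1 then A else Aᶜ) ∩ (g i).2.1) := by
      ext x
      simp only [Set.mem_preimage, Set.mem_singleton_iff, Set.mem_iInter, Set.mem_inter_iff,
        ← hc]
      rw [funext_iff]
      simp only [Prod.ext_iff, G]
      refine forall_congr' fun i => and_congr_left fun _ => ?_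
      cases (g i).1 <;> simp
    rw [this]
    refine isClopen_iInter_of_finite fun i => IsClopen.preimage ?_ (T.continuous.iterate i)
    refine IsClopen.inter ?_ (hPclopen _ (g i).2.2)
    split_ifs
    · exact hA
    · exact hA.compl
  refine ⟨Fintype.card ι, fun x => (e (G x) : ℕ) + 1, ?_, ?_, ?_, ?_⟩
  · have : Nonempty ι := ⟨G (Classical.arbitrary X)⟩
    exact Fintype.card_pos
  · intro x
    have := (e (G x)).2
    simp only [Set.mem_Icc]; omega
  · intro k
    have : (fun x => (e (G x) : ℕ) + 1) ⁻¹' {k} =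
        ⋃ g : {g : ι // (e g : ℕ) + 1 = k}, G ⁻¹' {g.1} := by
      ext x
      simp
    rw [this]
    exact isClopen_iUnion_of_finite fun g => hG g.1
  · intro x y hxy i hi
    have h1 : G x = G y := e.injective (Fin.ext (by simpa using hxy))
    have h2 := congrFun h1 ⟨i, by omega⟩
    simp only [G, Prod.ext_iff, decide_eq_decide] at h2
    exact h2


/-- Let `(X,T)` be a zero dimensional dynamical system, `A` a nonempty clopen complete
`T`-section, and `P` a finite partition of `X` into clopen sets. Then there is a
Kakutani–Rokhlin partition `Q` for `(X,T)` whose top equals `A` and which refines `P`. -/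
theorem stmt3 {X : Type*} [TopologicalSpace X] [CompactSpace X]
    [TopologicalSpace.MetrizableSpace X] [TotallyDisconnectedSpace X] [Nonempty X]
    (T : X ≃ₜ X) (A : Set X) (hAne : A.Nonempty) (hA : IsClopen A)
    (hAsec : IsCompleteSection T A)
    (P : Finset (Set X)) (hPclopen : ∀ S ∈ P, IsClopen S)
    (hPdisj : ∀ S ∈ P, ∀ S' ∈ P, S ≠ S' → Disjoint S S')
    (hPcover : ⋃₀ (P : Set (Set X)) = Set.univ) :
    ∃ Q : KRPartition X T, Q.top = A ∧ ∀ S ∈ Q.parts, ∃ S' ∈ P, S ⊆ S' := by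
  classical
  have hcex : ∀ x, ∃ S : P, x ∈ S.1 := by
    intro x
    have : x ∈ ⋃₀ (P : Set (Set X)) := by rw [hPcover]; trivial
    obtain ⟨S, hS, hx⟩ := this
    exact ⟨⟨S, hS⟩, hx⟩
  choose c hcmem using hcex
  have hc : ∀ x, ∀ S : P, c x = S ↔ x ∈ S.1 := by
    intro x S
    refine ⟨fun h => h ▸ hcmem x, fun h => ?_⟩
    by_contra hne
    exact Set.disjoint_left.1 (hPdisj _ (c x).2 _ S.2 fun h' => hne (Subtype.ext h')) (hcmem x) h
  obtain ⟨M, hM⟩ := kr_fwd T A hA hAsec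
  choose r hrM hrA hrmin using hM
  obtain ⟨K, F, hK, hFK, hFc, hF⟩ := kr_name T A hA M P hPclopen c hc
  have hFr : ∀ x y, F x = F y → r x = r y := by
    intro x y h
    apply le_antisymm
    · by_contra! hlt
      exact hrmin x _ hlt ((hF x y h _ (hrM y)).1.2 (hrA y))
    · by_contra! hlt
      exact hrmin y _ hlt ((hF x y h _ (hrM x)).1.1 (hrA x))
  let J : ℕ → ℕ := fun k => if h : ∃ x, F x = k then r h.choose + 1 else 1
  have hJ : ∀ x, J (F x) = r x + 1 := by
    intro x
    have h : ∃ y, F y = F x := ⟨x, rfl⟩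
    simp only [J, dif_pos h, hFr _ _ h.choose_spec]
  let B : Set X := ⇑T.symm ⁻¹' A
  let Z : ℕ → ℕ → Set X := fun k j => (⇑T.symm)^[j - 1] ⁻¹' (B ∩ F ⁻¹' {k})
  have hZ : ∀ k j y, y ∈ Z k j ↔ ∃ a ∈ A, F (T a) = k ∧ (⇑T)^[j - 1] (T a) = y := by
    intro k j y
    constructor
    · rintro ⟨h1, h2⟩
      refine ⟨_, h1, ?_, ?_⟩
      · simpa using h2
      · rw [T.apply_symm_apply]
        exact kr_cancel T.symm (j - 1) 0 y
    · rintro ⟨a, ha, h1, rfl⟩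
      have := kr_cancel T (j - 1) 0 (T a)
      simp only [add_zero, Function.iterate_zero, id] at this
      simp only [Z, Set.mem_preimage, this, B, Set.mem_inter_iff, T.symm_apply_apply,
        Set.mem_singleton_iff]
      exact ⟨ha, h1⟩
  -- every point lies at some level of a tower
  have hlev : ∀ y, ∃ a ∈ A, ∃ s ≤ r (T a), (⇑T)^[s] (T a) = y := by
    intro y
    obtain ⟨s, a, ha, hy, hmin⟩ := kr_bwd T A hA hAsec y
    refine ⟨a, ha, s, ?_, hy⟩
    by_contra! hlt
    apply hmin (s - r (T a) - 1) (by omega)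
    have e1 : (⇑T)^[(s - r (T a) - 1 + 1) + r (T a)] (T a) = y := by
      rw [← hy, Function.iterate_succ_apply]; congr 2; omega
    rw [← e1, kr_cancel]
    exact hrA _
  have hord : ∀ a ∈ A, ∀ b ∈ A, ∀ i j, j ≤ r (T b) →
      (⇑T)^[i] (T a) = (⇑T)^[j] (T b) → ¬ i < j := by
    intro a ha b hb i j hj h hij
    have h1 := kr_cancel T (i + 1) 0 a
    have h2 := kr_cancel T (i + 1) (j - i - 1) (T b)
    have e1 : i + 1 + (j - i - 1) = j := by omega
    rw [e1, ← h, ← Function.iterate_succ_apply] at h2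
    simp only [add_zero, Function.iterate_zero, id] at h1
    rw [h1] at h2
    exact hrmin (T b) (j - i - 1) (by omega) (h2 ▸ ha)
  have htop : (⋃ k ∈ Set.Icc 1 K, Z k (J k)) = A := by
    ext y
    simp only [Set.mem_iUnion, hZ]
    constructor
    · rintro ⟨k, hk, a, ha, rfl, rfl⟩
      rw [hJ]; exact hrA _
    · intro hy
      obtain ⟨a, ha, s, hs, rfl⟩ := hlev y
      refine ⟨F (T a), hFK _, a, ha, rfl, ?_⟩
      rw [hJ]
      have : s = r (T a) := by
        by_contra hne
        exact hrmin _ s (by omega) hy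
      rw [this]; rfl
  let Q : KRPartition X T :=
    { K := K
      K_pos := hK
      J := J
      J_pos := by
        intro k _
        simp only [J]; split_ifs <;> omega
      Z := Z
      clopen := by
        intro k _ j _
        exact ((hA.preimage T.symm.continuous).inter (hFc k)).preimage
          (T.symm.continuous.iterate _)
      disj := by
        intro k _ j hj k' _ j' hj' hne
        rw [Set.disjoint_left]
        intro y hy hy'
        obtain ⟨a, ha, rfl, h1⟩ := (hZ _ _ _).1 hy
        obtain ⟨b, hb, rfl, h2⟩ := (hZ _ _ _).1 hy'
        rw [hJ, Set.mem_Icc] at hj hj'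
        have n1 := hord a ha b hb _ _ (by omega) (h1.trans h2.symm)
        have n2 := hord b hb a ha _ _ (by omega) (h2.trans h1.symm)
        have hjj : j = j' := by omega
        subst hjj
        have : T a = T b := (T.injective.iterate _) (h1.trans h2.symm)
        rw [this] at hne
        exact hne rfl
      cover := by
        ext y
        simp only [Set.mem_iUnion, hZ, Set.mem_univ, iff_true]
        obtain ⟨a, ha, s, hs, h⟩ := hlev y
        refine ⟨F (T a), hFK _, s + 1, ?_, a, ha, rfl, h⟩
        rw [hJ, Set.mem_Icc]; omega
      tower := by
        intro k _ j hj _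
        obtain ⟨j, rfl⟩ := Nat.exists_eq_add_of_le' hj
        ext y
        simp only [Set.mem_image, hZ, Nat.add_sub_cancel]
        constructor
        · rintro ⟨_, ⟨a, ha, h1, rfl⟩, rfl⟩
          exact ⟨a, ha, h1, Function.iterate_succ_apply' _ _ _⟩
        · rintro ⟨a, ha, h1, rfl⟩
          exact ⟨_, ⟨a, ha, h1, rfl⟩, (Function.iterate_succ_apply' _ _ _).symm⟩
      top_to_base := by
        rw [htop]
        ext y
        simp only [Set.mem_image, Set.mem_iUnion, hZ]
        constructor
        · rintro ⟨a, ha, rfl⟩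
          exact ⟨F (T a), hFK _, a, ha, rfl, rfl⟩
        · rintro ⟨k, _, a, ha, _, h⟩
          exact ⟨a, ha, h⟩ }
  refine ⟨Q, htop, ?_⟩
  rintro S ⟨k, hk, j, hj, rfl⟩
  change j ∈ Set.Icc 1 (J k) at hj
  change ∃ S' ∈ P, Z k j ⊆ S'
  rcases (Z k j).eq_empty_or_nonempty with h | ⟨y, hy⟩
  · rw [h]
    exact ⟨_, (c (Classical.arbitrary X)).2, Set.empty_subset _⟩
  · refine ⟨_, (c y).2, fun z hz => ?_⟩
    obtain ⟨a, ha, rfl, rfl⟩ := (hZ _ _ _).1 hy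
    obtain ⟨b, hb, hab, rfl⟩ := (hZ _ _ _).1 hz
    rw [hJ, Set.mem_Icc] at hj
    have := hrM (T a)
    rw [← hc]
    exact (hF _ _ hab (j - 1) (by omega)).2
end

section
/- Let (X,T) be a zero dimensional dynamical system and let W ⊆ X be a nonempty closed set. Then the following are equivalent: (i) there exists a system of Kakutani–Rokhlin partitions (Pₙ)_{n≥0} for (X,T,W) such that ⋂_{n≥0} Zₙ = W, where Zₙ denotes the top of Pₙ; (ii) W is a quasi-section for (X,T). -/
/-- A system of K-R partitions for `(X,T,W)`: a sequence of K-R partitions, each with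
`W` contained in its top, each refining the previous one, with decreasing tops, and whose
union of elements is a basis for the topology of `X`. -/
structure KRSystem (X : Type*) [TopologicalSpace X] (T : X ≃ₜ X) (W : Set X) where
  P : ℕ → KRPartition X T
  W_subset_top : ∀ n, W ⊆ (P n).top
  refines : ∀ n, ∀ S ∈ (P (n + 1)).parts, ∃ S' ∈ (P n).parts, S ⊆ S'
  top_mono : ∀ n, (P (n + 1)).top ⊆ (P n).top
  isBasis : TopologicalSpace.IsTopologicalBasis (⋃ n, (P n).parts)

/-- The integer iterates of a homeomorphism, axiomatized by what we need. -/
lemma kr_phi {X : Type*} [TopologicalSpace X] (T : X ≃ₜ X) :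
    ∃ φ : ℤ → X → X, (∀ n, φ n = ⇑(T.toEquiv ^ n)) ∧ (∀ n, Continuous (φ n)) ∧
      (∀ x, φ 0 x = x) ∧ (∀ a b x, φ a (φ b x) = φ (a + b) x) ∧ (∀ x, φ 1 x = T x) := by
  refine ⟨fun n => ⇑(T.toEquiv ^ n), fun _ => rfl, ?_, ?_, ?_, ?_⟩
  · have hnat : ∀ (S : X ≃ₜ X) (n : ℕ), Continuous ⇑(S.toEquiv ^ n : Equiv.Perm X) := by
      intro S n
      induction n with
      | zero => simpa using continuous_id
      | succ n ih =>
        rw [pow_succ, Equiv.Perm.coe_mul]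
        exact ih.comp S.continuous
    intro n
    cases n with
    | ofNat n => simpa using hnat T n
    | negSucc n =>
      have := hnat T.symm (n + 1)
      change Continuous ⇑(T.toEquiv ^ (Int.negSucc n) : Equiv.Perm X)
      rw [zpow_negSucc, ← inv_pow]
      exact this
  · intro x; simp
  · intro a b x
    change _ = (T.toEquiv ^ (a + b) : Equiv.Perm X) x
    rw [zpow_add]; rfl
  · intro x; simp

/-- Bounded forward and backward hitting times of a clopen complete section. -/
lemma kr_bound_s5 {X : Type*} [TopologicalSpace X] [CompactSpace X] (φ : ℤ → X → X)
    (hc : ∀ n, Continuous (φ n)) (h0 : ∀ x, φ 0 x = x)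
    (ha : ∀ a b x, φ a (φ b x) = φ (a + b) x) (U : Set X) (hU : IsClopen U)
    (hcs : ∀ x, ∃ n, φ n x ∈ U) :
    ∃ M : ℕ, (∀ x, ∃ m : ℕ, m ≤ M ∧ φ m x ∈ U) ∧ (∀ x, ∃ m : ℕ, φ (-m) x ∈ U) := by
  obtain ⟨t, ht⟩ := isCompact_univ.elim_finite_subcover (fun n : ℤ => φ n ⁻¹' U)
    (fun n => hU.isOpen.preimage (hc n)) (fun x _ => by
      obtain ⟨n, hn⟩ := hcs x
      exact Set.mem_iUnion.2 ⟨n, hn⟩)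
  let N : ℕ := ∑ n ∈ t, n.natAbs
  have hN : ∀ n ∈ t, n.natAbs ≤ N := fun n hn =>
    Finset.single_le_sum (f := fun n : ℤ => n.natAbs) (fun _ _ => Nat.zero_le _) hn
  have key : ∀ x, ∃ n : ℤ, n.natAbs ≤ N ∧ φ n x ∈ U := by
    intro x
    have := ht (Set.mem_univ x)
    simp only [Set.mem_iUnion] at this
    obtain ⟨n, hn, hx⟩ := this
    exact ⟨n, hN n hn, hx⟩
  refine ⟨2 * N, fun x => ?_, fun x => ?_⟩
  · obtain ⟨n, hn, hx⟩ := key (φ N x)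
    rw [ha] at hx
    refine ⟨(n + N).toNat, by omega, ?_⟩
    rwa [show (((n + N).toNat : ℕ) : ℤ) = n + N by omega]
  · obtain ⟨n, hn, hx⟩ := key (φ (-N) x)
    rw [ha] at hx
    refine ⟨(N - n).toNat, ?_⟩
    rwa [show -(((N - n).toNat : ℕ) : ℤ) = n + -N by omega]

lemma kr_enum (V : Type*) [Finite V] [Nonempty V] :
    ∃ (K : ℕ) (v : ℕ → V), 1 ≤ K ∧ (∀ k ∈ Set.Icc 1 K, ∀ k' ∈ Set.Icc 1 K, v k = v k' → k = k') ∧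
      ∀ w, ∃ k ∈ Set.Icc 1 K, v k = w := by
  classical
  obtain ⟨K, ⟨e⟩⟩ := Finite.exists_equiv_fin V
  have w0 : V := Classical.arbitrary V
  have hK : 1 ≤ K := by have := (e w0).2; omega
  refine ⟨K, fun k => if h : k - 1 < K then e.symm ⟨k - 1, h⟩ else w0, hK, ?_, ?_⟩
  · rintro k ⟨h1, h2⟩ k' ⟨h3, h4⟩ h
    have a1 : k - 1 < K := by omega
    have a2 : k' - 1 < K := by omega
    simp only [a1, a2, dif_pos, EmbeddingLike.apply_eq_iff_eq, Fin.mk.injEq] at h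
    omega
  · intro w
    refine ⟨(e w).1 + 1, ⟨by omega, by have := (e w).2; omega⟩, ?_⟩
    simp

lemma kr_exists {X : Type*} [TopologicalSpace X] [CompactSpace X] (T : X ≃ₜ X)
    {ι : Type*} [Finite ι] (C : ι → Set X) (hC : ∀ i, IsClopen (C i)) (u : ι)
    (hcs : IsCompleteSection T (C u)) :
    ∃ P : KRPartition X T, P.top = C u ∧
      ∀ S ∈ P.parts, ∀ i, S ⊆ C i ∨ Disjoint S (C i) := by
  classical
  obtain ⟨φ, hφ, hc, h0, ha, h1⟩ := kr_phi T
  have hcs' : ∀ x, ∃ n, φ n x ∈ C u := by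
    intro x
    have : x ∈ (⋃ n : ℤ, ⇑(T.toEquiv ^ n) '' C u) := by rw [hcs]; trivial
    obtain ⟨n, y, hy, hx⟩ := Set.mem_iUnion.1 this
    refine ⟨-n, ?_⟩
    rw [← hφ] at hx
    rw [← hx, ha]
    simpa [h0] using hy
  obtain ⟨M, hM, hback⟩ := kr_bound_s5 φ hc h0 ha (C u) (hC u) hcs'
  let name : X → Set (Fin (M + 1) × ι) := fun x => {p | φ p.1.1 x ∈ C p.2}
  let hgt : Set (Fin (M + 1) × ι) → ℕ := fun w => sInf {i | ∃ h : i < M + 1, (⟨i, h⟩, u) ∈ w}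
  have hgt_le : ∀ w, hgt w ≤ M := by
    intro w
    rcases Set.eq_empty_or_nonempty {i | ∃ h : i < M + 1, ((⟨i, h⟩, u) : Fin (M + 1) × ι) ∈ w} with h | h
    · change sInf _ ≤ M
      rw [h]; simp
    · obtain ⟨h, _⟩ := Nat.sInf_mem h
      exact Nat.lt_succ_iff.1 h
  have hgt_mem : ∀ x, φ (hgt (name x)) x ∈ C u := by
    intro x
    obtain ⟨m, hm, hx⟩ := hM x
    have hne : {i | ∃ h : i < M + 1, ((⟨i, h⟩, u) : Fin (M + 1) × ι) ∈ name x}.Nonempty :=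
      ⟨m, by omega, hx⟩
    obtain ⟨h, h'⟩ := Nat.sInf_mem hne
    exact h'
  have hgt_min : ∀ x, ∀ i : ℕ, φ i x ∈ C u → hgt (name x) ≤ i := by
    intro x i hi
    by_cases h : i < M + 1
    · exact Nat.sInf_le ⟨h, hi⟩
    · have := hgt_le (name x); omega
  have name_clopen : ∀ w, IsClopen {x | name x = w} := by
    intro w
    have : {x | name x = w} = ⋂ p : Fin (M + 1) × ι, {x | φ p.1.1 x ∈ C p.2 ↔ p ∈ w} := by
      ext x
      simp only [Set.mem_ofPred_eq, Set.mem_iInter, Set.ext_iff, name]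
    rw [this]
    refine isClopen_iInter_of_finite fun p => ?_
    have hp : IsClopen (φ p.1.1 ⁻¹' C p.2) := (hC _).preimage (hc _)
    by_cases h : p ∈ w
    · simp only [h, iff_true]; exact hp
    · simp only [h, iff_false]; exact hp.compl
  obtain ⟨K, v, hK, vinj, vsurj⟩ := kr_enum (Set (Fin (M + 1) × ι))
  let Z : ℕ → ℕ → Set X := fun k j =>
    {x | φ (-1) (φ (1 - j) x) ∈ C u ∧ name (φ (1 - j) x) = v k}
  have memZ : ∀ k j x, x ∈ Z k j ↔ (φ (-j) x ∈ C u ∧ name (φ (1 - j) x) = v k) := by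
    intro k j x
    simp only [Z, Set.mem_ofPred_eq, ha]
    rw [show (-1 + (1 - (j : ℤ))) = -j by ring]
  -- every point lies in a tower
  have hcov : ∀ x, ∃ k ∈ Set.Icc 1 K, ∃ j ∈ Set.Icc 1 (hgt (v k) + 1), x ∈ Z k j := by
    intro x
    have hex : ∃ m : ℕ, φ (-m) (φ (-1) x) ∈ C u := hback _
    let n := Nat.find hex
    have hn := Nat.find_spec hex
    have hmin : ∀ m : ℕ, φ (-m) (φ (-1) x) ∈ C u → n ≤ m := fun m hm => Nat.find_min' hex hm
    change φ (-(n : ℕ)) (φ (-1) x) ∈ C u at hn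
    obtain ⟨k, hk, hkv⟩ := vsurj (name (φ (-n) x))
    refine ⟨k, hk, n + 1, ⟨by omega, ?_⟩, ?_⟩
    · have hm := hgt_mem (φ (-n) x)
      rw [← hkv, ha] at hm
      by_contra hlt
      have hlt' : hgt (v k) < n := by omega
      have := hmin (n - hgt (v k) - 1) (by
        rw [ha]
        rwa [show (-((n - hgt (v k) - 1 : ℕ) : ℤ) + -1) = hgt (v k) + -n by omega])
      omega
    · rw [memZ]
      rw [ha] at hn
      push_cast
      refine ⟨by rwa [show -((n : ℤ) + 1) = -n + -1 by ring], ?_⟩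
      rw [show (1 - ((n : ℤ) + 1)) = -n by ring, hkv]
  have htop : (⋃ k ∈ Set.Icc 1 K, Z k (hgt (v k) + 1)) = C u := by
    ext x
    simp only [Set.mem_iUnion]
    constructor
    · rintro ⟨k, hk, hx⟩
      obtain ⟨_, hx⟩ := (memZ _ _ _).1 hx
      have := hgt_mem (φ (1 - ((hgt (v k) + 1 : ℕ) : ℤ)) x)
      rw [hx, ha] at this
      rw [show ((hgt (v k) : ℤ) + (1 - ((hgt (v k) + 1 : ℕ) : ℤ))) = 0 by push_cast; ring, h0] at this
      exact this
    · intro hx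
      obtain ⟨k, hk, j, ⟨hj1, hj2⟩, hxz⟩ := hcov x
      obtain ⟨_, hn⟩ := (memZ _ _ _).1 hxz
      have := hgt_min (φ (1 - j) x) (j - 1) (by
        rw [ha, show (((j - 1 : ℕ) : ℤ) + (1 - j)) = 0 by omega, h0]; exact hx)
      rw [hn] at this
      have hj : j = hgt (v k) + 1 := by omega
      subst hj
      exact ⟨k, hk, hxz⟩
  have himg : ∀ (A : Set X) x, x ∈ ⇑T '' A ↔ φ (-1) x ∈ A := by
    intro A x
    constructor
    · rintro ⟨y, hy, rfl⟩
      rw [← h1, ha]; simpa [h0] using hy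
    · intro h
      refine ⟨_, h, ?_⟩
      rw [← h1, ha]; simp [h0]
  have hdisj : ∀ k ∈ Set.Icc 1 K, ∀ j ∈ Set.Icc 1 (hgt (v k) + 1), ∀ k' ∈ Set.Icc 1 K,
      ∀ j' ∈ Set.Icc 1 (hgt (v k') + 1), ∀ x, x ∈ Z k j → x ∈ Z k' j' → ¬ j < j' := by
    rintro k hk j ⟨hj1, hj2⟩ k' hk' j' ⟨hj1', hj2'⟩ x hx hx' hlt
    obtain ⟨hu, hn⟩ := (memZ _ _ _).1 hx
    obtain ⟨hu', hn'⟩ := (memZ _ _ _).1 hx'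
    have := hgt_min (φ (1 - j') x) (j' - j - 1) (by
      rw [ha, show (((j' - j - 1 : ℕ) : ℤ) + (1 - j')) = -j by omega]; exact hu)
    rw [hn'] at this
    omega
  refine ⟨{ K := K, K_pos := hK, J := fun k => hgt (v k) + 1, J_pos := fun _ _ => by omega,
            Z := Z, clopen := ?_, disj := ?_, cover := ?_, tower := ?_, top_to_base := ?_ },
    htop, ?_⟩
  · intro k _ j _
    exact ((hC u).preimage ((hc (-1)).comp (hc (1 - j)))).inter
      ((name_clopen (v k)).preimage (hc (1 - j)))
  · intro k hk j hj k' hk' j' hj' hne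
    rw [Set.disjoint_left]
    intro x hx hx'
    have a := hdisj k hk j hj k' hk' j' hj' x hx hx'
    have b := hdisj k' hk' j' hj' k hk j hj x hx' hx
    have hjj : j = j' := by omega
    subst hjj
    obtain ⟨_, hn⟩ := (memZ _ _ _).1 hx
    obtain ⟨_, hn'⟩ := (memZ _ _ _).1 hx'
    exact hne (by rw [vinj k hk k' hk' (hn.symm.trans hn')])
  · rw [Set.eq_univ_iff_forall]
    intro x
    obtain ⟨k, hk, j, hj, hx⟩ := hcov x
    simp only [Set.mem_iUnion]
    exact ⟨k, hk, j, hj, hx⟩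
  · intro k hk j _ _
    ext x
    rw [himg, memZ, memZ, ha, ha]
    push_cast
    rw [show (-(j : ℤ) + -1) = -(j + 1) by ring, show (1 - (j : ℤ) + -1) = 1 - (j + 1) by ring]
  · rw [htop]
    ext x
    rw [himg]
    simp only [Set.mem_iUnion, memZ]
    constructor
    · intro hx
      obtain ⟨k, hk, hkv⟩ := vsurj (name x)
      refine ⟨k, hk, by simpa using hx, ?_⟩
      simp [h0, hkv]
    · rintro ⟨k, hk, hx, _⟩
      simpa using hx
  · rintro S ⟨k, hk, j, ⟨hj1, hj2⟩, rfl⟩ i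
    change j ≤ hgt (v k) + 1 at hj2
    have hjM : j - 1 < M + 1 := by have := hgt_le (v k); omega
    have key : ∀ x ∈ Z k j, (x ∈ C i ↔ ((⟨j - 1, hjM⟩, i) : Fin (M + 1) × ι) ∈ v k) := by
      intro x hx
      obtain ⟨_, hn⟩ := (memZ _ _ _).1 hx
      rw [← hn]
      change _ ↔ φ ((j - 1 : ℕ) : ℤ) (φ (1 - j) x) ∈ C i
      rw [ha, show (((j - 1 : ℕ) : ℤ) + (1 - j)) = 0 by omega, h0]
    by_cases h : ((⟨j - 1, hjM⟩, i) : Fin (M + 1) × ι) ∈ v k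
    · exact Or.inl fun x hx => (key x hx).2 h
    · exact Or.inr (Set.disjoint_left.2 fun x hx hxi => h ((key x hx).1 hxi))

lemma kr_parts_finite {X : Type*} [TopologicalSpace X] {T : X ≃ₜ X} (P : KRPartition X T) :
    P.parts.Finite := by
  have : P.parts = ⋃ k ∈ Set.Icc 1 P.K, ⋃ j ∈ Set.Icc 1 (P.J k), {P.Z k j} := by
    ext S
    simp only [KRPartition.parts, Set.mem_iUnion, Set.mem_singleton_iff, exists_prop]
    rfl
  rw [this]
  exact (Set.finite_Icc _ _).biUnion fun k _ => (Set.finite_Icc _ _).biUnion fun j _ =>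
    Set.finite_singleton _

lemma kr_parts_clopen {X : Type*} [TopologicalSpace X] {T : X ≃ₜ X} (P : KRPartition X T)
    (S : Set X) (hS : S ∈ P.parts) : IsClopen S := by
  obtain ⟨k, hk, j, hj, rfl⟩ := hS
  exact P.clopen k hk j hj

lemma kr_parts_cover {X : Type*} [TopologicalSpace X] {T : X ≃ₜ X} (P : KRPartition X T)
    (x : X) : ∃ S ∈ P.parts, x ∈ S := by
  have : x ∈ (⋃ k ∈ Set.Icc 1 P.K, ⋃ j ∈ Set.Icc 1 (P.J k), P.Z k j) := by
    rw [P.cover]; trivial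
  simp only [Set.mem_iUnion] at this
  obtain ⟨k, hk, j, hj, hx⟩ := this
  exact ⟨_, ⟨k, hk, j, hj, rfl⟩, hx⟩

lemma kr_top_clopen {X : Type*} [TopologicalSpace X] {T : X ≃ₜ X} (P : KRPartition X T) :
    IsClopen P.top :=
  (Set.finite_Icc _ _).isClopen_biUnion fun k hk =>
    P.clopen k hk _ ⟨P.J_pos k hk, le_rfl⟩

lemma kr_reach_top {X : Type*} [TopologicalSpace X] {T : X ≃ₜ X} (P : KRPartition X T)
    (x : X) : ∃ n : ℕ, (T.toEquiv ^ n : Equiv.Perm X) x ∈ P.top := by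
  obtain ⟨S, ⟨k, hk, j, ⟨hj1, hj2⟩, rfl⟩, hx⟩ := kr_parts_cover P x
  have : ∀ d : ℕ, j + d ≤ P.J k → (T.toEquiv ^ d : Equiv.Perm X) x ∈ P.Z k (j + d) := by
    intro d
    induction d with
    | zero => intro _; simpa using hx
    | succ d ih =>
      intro h
      have h2 := ih (by omega)
      rw [pow_succ', Equiv.Perm.mul_apply, ← add_assoc,
        ← P.tower k hk (j + d) (by omega) (by omega)]
      exact ⟨_, h2, rfl⟩
  refine ⟨P.J k - j, ?_⟩
  have h := this (P.J k - j) (by omega)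
  rw [show j + (P.J k - j) = P.J k by omega] at h
  simp only [KRPartition.top, Set.mem_iUnion]
  exact ⟨k, hk, h⟩

lemma kr_step {X : Type*} [TopologicalSpace X] [CompactSpace X] (T : X ≃ₜ X)
    (U D : Set X) (hU : IsClopen U) (hD : IsClopen D) (hcs : IsCompleteSection T U)
    (F : Set (Set X)) (hF : F.Finite) (hFc : ∀ S ∈ F, IsClopen S) :
    ∃ P : KRPartition X T, P.top = U ∧
      (∀ S ∈ P.parts, S ⊆ D ∨ Disjoint S D) ∧
      ∀ S ∈ P.parts, ∀ A ∈ F, S ⊆ A ∨ Disjoint S A := by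
  have hfin : (insert U (insert D F)).Finite := (hF.insert _).insert _
  have : Finite ↥(insert U (insert D F)) := hfin
  obtain ⟨P, hP, hP'⟩ := kr_exists T (ι := ↥(insert U (insert D F))) (fun A => A.1)
    (by
      rintro ⟨A, rfl | rfl | hA⟩
      · exact hU
      · exact hD
      · exact hFc _ hA) ⟨U, by simp⟩ hcs
  exact ⟨P, hP, fun S hS => hP' S hS ⟨D, by simp⟩, fun S hS A hA => hP' S hS ⟨A, by simp [hA]⟩⟩

/-- For a zero dimensional dynamical system `(X,T)` and a nonempty closed set `W ⊆ X`, the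
following are equivalent: (i) there is a system of K-R partitions for `(X,T,W)` whose tops
intersect exactly in `W`; (ii) `W` is a quasi-section for `(X,T)`. -/
theorem stmt5 {X : Type*} [TopologicalSpace X] [CompactSpace X]
    [TopologicalSpace.MetrizableSpace X] [TotallyDisconnectedSpace X] [Nonempty X]
    (T : X ≃ₜ X) (W : Set X) (hWcl : IsClosed W) (hWne : W.Nonempty) :
    (∃ S : KRSystem X T W, (⋂ n, (S.P n).top) = W) ↔ IsQuasiSection T W := by
  constructor
  · rintro ⟨S, hS⟩
    refine ⟨hWcl, fun U hU hWU => ?_⟩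
    have hanti : Antitone fun n => (S.P n).top := antitone_nat_of_succ_le S.top_mono
    obtain ⟨n, hn⟩ := exists_subset_nhds_of_isCompact
      (V := fun n => (S.P n).top) (directed_of_isDirected_le hanti)
      (fun n => (kr_top_clopen (S.P n)).isClosed.isCompact) (U := U)
      (fun x hx => hU.isOpen.mem_nhds (hWU (hS ▸ hx)))
    rw [IsCompleteSection, Set.eq_univ_iff_forall]
    intro x
    obtain ⟨m, hm⟩ := kr_reach_top (S.P n) x
    refine Set.mem_iUnion.2 ⟨-(m : ℤ), _, hn hm, ?_⟩
    simp
  · rintro ⟨-, hq⟩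
    let _ := TopologicalSpace.metrizableSpaceMetric X
    have hsc : SecondCountableTopology X := inferInstance
    obtain ⟨b, hbsub, hbc, hb⟩ :=
      (isTopologicalBasis_isClopen (X := X)).exists_countable
    have hbne : b.Nonempty := by
      obtain ⟨A, hA, _⟩ := hb.exists_subset_of_mem_open (Set.mem_univ (Classical.arbitrary X))
        isOpen_univ
      exact ⟨A, hA⟩
    obtain ⟨C, rfl⟩ := hbc.exists_eq_range hbne
    have hC : ∀ n, IsClopen (C n) := fun n => hbsub ⟨n, rfl⟩
    let U : ℕ → Set X := fun n => ⋂ i ∈ Set.Iio n, {x | Disjoint (C i) W → x ∉ C i}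
    have memU : ∀ n x, x ∈ U n ↔ ∀ i < n, Disjoint (C i) W → x ∉ C i := by
      intro n x
      simp [U]
    have hUc : ∀ n, IsClopen (U n) := by
      intro n
      refine (Set.finite_Iio n).isClopen_biInter fun i _ => ?_
      by_cases h : Disjoint (C i) W
      · simp only [h, true_imp_iff]; exact (hC i).compl
      · simpa [h] using isClopen_univ
    have hWU : ∀ n, W ⊆ U n := by
      intro n x hx
      rw [memU]
      intro i _ hd hxi
      exact Set.disjoint_left.1 hd hxi hx
    have hUs : ∀ n, IsCompleteSection T (U n) := fun n => hq _ (hUc n) (hWU n)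
    have hUI : (⋂ n, U n) = W := by
      refine Set.Subset.antisymm (fun x hx => ?_) (Set.subset_iInter hWU)
      by_contra hxW
      obtain ⟨_, ⟨i, rfl⟩, hxi, hsub⟩ := hb.exists_subset_of_mem_open
        (show x ∈ Wᶜ from hxW) hWcl.isOpen_compl
      exact (memU _ _).1 (Set.mem_iInter.1 hx (i + 1)) i (by omega)
        (Set.disjoint_left.2 fun y hy => hsub hy) hxi
    have hstep : ∀ (n : ℕ) (Q : KRPartition X T), ∃ P : KRPartition X T, P.top = U n ∧
        (∀ S ∈ P.parts, S ⊆ C n ∨ Disjoint S (C n)) ∧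
        ∀ S ∈ P.parts, ∀ A ∈ Q.parts, S ⊆ A ∨ Disjoint S A := fun n Q =>
      kr_step T (U n) (C n) (hUc n) (hC n) (hUs n) Q.parts (kr_parts_finite Q)
        (kr_parts_clopen Q)
    choose step hs1 hs2 hs3 using hstep
    obtain ⟨Q0, -⟩ := kr_step T (U 0) (C 0) (hUc 0) (hC 0) (hUs 0) ∅ Set.finite_empty (by simp)
    let seq : ℕ → KRPartition X T := fun n => Nat.rec (step 0 Q0) (fun n Q => step (n + 1) Q) n
    have hseq : ∀ n, ∃ Q, seq n = step n Q := by
      intro n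
      cases n with
      | zero => exact ⟨Q0, rfl⟩
      | succ n => exact ⟨seq n, rfl⟩
    have htop : ∀ n, (seq n).top = U n := by
      intro n
      obtain ⟨Q, h⟩ := hseq n
      rw [h, hs1]
    refine ⟨{ P := seq, W_subset_top := ?_, refines := ?_, top_mono := ?_, isBasis := ?_ }, ?_⟩
    · intro n
      rw [htop]; exact hWU n
    · intro n S hS
      rcases S.eq_empty_or_nonempty with rfl | ⟨x, hx⟩
      · obtain ⟨A, hA, _⟩ := kr_parts_cover (seq n) (Classical.arbitrary X)
        exact ⟨A, hA, Set.empty_subset _⟩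
      · obtain ⟨A, hA, hxA⟩ := kr_parts_cover (seq n) x
        rcases hs3 (n + 1) (seq n) S hS A hA with h | h
        · exact ⟨A, hA, h⟩
        · exact absurd hxA (Set.disjoint_left.1 h hx)
    · intro n x hx
      have hx' := (memU _ _).1 ((htop (n + 1)).le hx)
      exact (htop n).ge ((memU _ _).2 fun i hi => hx' i (by omega))
    · refine TopologicalSpace.isTopologicalBasis_of_isOpen_of_nhds ?_ ?_
      · intro S hS
        obtain ⟨n, hn⟩ := Set.mem_iUnion.1 hS
        exact (kr_parts_clopen _ _ hn).isOpen
      · intro x V hx hV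
        obtain ⟨_, ⟨n, rfl⟩, hxn, hsub⟩ := hb.exists_subset_of_mem_open hx hV
        obtain ⟨S, hS, hxS⟩ := kr_parts_cover (seq n) x
        refine ⟨S, Set.mem_iUnion.2 ⟨n, hS⟩, hxS, ?_⟩
        obtain ⟨Q, h⟩ := hseq n
        rw [h] at hS
        rcases hs2 n Q S hS with h | h
        · exact h.trans hsub
        · exact absurd hxn (Set.disjoint_left.1 h hxS)
    · simp only [htop]
      exact hUI
end

section
/- Let (X,T) be a zero dimensional dynamical system and let x₀ ∈ X. Then the singleton {x₀} is a quasi-section for (X,T) if and only if (X,T) is essentially minimal and x₀ belongs to the unique minimal set of (X,T). -/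
/-- `M` is a minimal set of `(X,T)`: `M` is nonempty, closed, `T(M) = M`, and `M` contains
no proper nonempty closed subset `M'` with `T(M') = M'`. -/
def IsMinimalSet {X : Type*} [TopologicalSpace X] (T : X ≃ₜ X) (M : Set X) : Prop :=
  M.Nonempty ∧ IsClosed M ∧ ⇑T '' M = M ∧
    ∀ M' ⊆ M, M'.Nonempty → IsClosed M' → ⇑T '' M' = M' → M' = M

theorem inv_iff_aux {X : Type*} [TopologicalSpace X] (T : X ≃ₜ X) (M : Set X) :
    ⇑T '' M = M ↔ ∀ x, T x ∈ M ↔ x ∈ M := by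
  constructor
  · intro h x
    constructor
    · intro hx
      rw [← h] at hx
      obtain ⟨y, hy, e⟩ := hx
      rwa [← T.injective e]
    · intro hx
      rw [← h]
      exact ⟨x, hx, rfl⟩
  · intro h
    ext x
    constructor
    · rintro ⟨y, hy, rfl⟩
      exact (h y).2 hy
    · intro hx
      refine ⟨T.symm x, (h _).1 (by simpa using hx), by simp⟩

theorem inv_zpow_aux {X : Type*} [TopologicalSpace X] (T : X ≃ₜ X) (M : Set X)
    (h : ∀ x, T x ∈ M ↔ x ∈ M) (n : ℤ) : ∀ x, (T.toEquiv ^ n) x ∈ M ↔ x ∈ M := by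
  induction n using Int.induction_on with
  | zero => intro x; simp
  | succ k ih =>
    intro x
    rw [zpow_add_one, Equiv.Perm.mul_apply, ih]
    exact h x
  | pred k ih =>
    intro x
    rw [zpow_sub_one, Equiv.Perm.mul_apply, ih, ← h]
    have : T ((T.toEquiv)⁻¹ x) = x := T.toEquiv.apply_symm_apply x
    rw [this]

theorem exists_minimal_aux {X : Type*} [TopologicalSpace X] [CompactSpace X]
    (T : X ≃ₜ X) (F : Set X) (hne : F.Nonempty) (hc : IsClosed F)
    (hi : ∀ x, T x ∈ F ↔ x ∈ F) : ∃ M ⊆ F, IsMinimalSet T M := by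
  obtain ⟨M, hMF, hM⟩ := zorn_superset_nonempty
    {M : Set X | M.Nonempty ∧ IsClosed M ∧ ∀ x, T x ∈ M ↔ x ∈ M} (by
      intro c hcS hch hcne
      refine ⟨⋂₀ c, ⟨?_, ?_, ?_⟩, fun s hs => Set.sInter_subset_of_mem hs⟩
      · have : Nonempty c := hcne.to_subtype
        exact IsCompact.nonempty_sInter_of_directed_nonempty_isCompact_isClosed
          (show IsChain (· ⊇ ·) c from hch.symm).directedOn (fun s hs => (hcS hs).1)
          (fun s hs => (hcS hs).2.1.isCompact) (fun s hs => (hcS hs).2.1)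
      · exact isClosed_sInter fun s hs => (hcS hs).2.1
      · intro x
        simp only [Set.mem_sInter]
        exact forall₂_congr fun s hs => (hcS hs).2.2 x) F ⟨hne, hc, hi⟩
  refine ⟨M, hMF, hM.prop.1, hM.prop.2.1, (inv_iff_aux T M).2 hM.prop.2.2, ?_⟩
  intro M' hsub h1 h2 h3
  exact (hM.eq_of_subset ⟨h1, h2, (inv_iff_aux T M').1 h3⟩ hsub)

/-- For a zero dimensional dynamical system `(X,T)` and `x₀ ∈ X`, the singleton `{x₀}` is a
quasi-section if and only if `(X,T)` is essentially minimal (has exactly one minimal set)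
and `x₀` belongs to the unique minimal set. -/
theorem stmt8 {X : Type*} [TopologicalSpace X] [CompactSpace X]
    [TopologicalSpace.MetrizableSpace X] [TotallyDisconnectedSpace X] [Nonempty X]
    (T : X ≃ₜ X) (x₀ : X) :
    IsQuasiSection T {x₀} ↔
      (∃! M : Set X, IsMinimalSet T M) ∧ ∀ M : Set X, IsMinimalSet T M → x₀ ∈ M := by
  constructor
  · rintro ⟨-, hq⟩
    have key : ∀ F : Set X, F.Nonempty → IsClosed F → (∀ x, T x ∈ F ↔ x ∈ F) → x₀ ∈ F := by
      intro F ⟨y, hy⟩ hc hi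
      by_contra hx
      obtain ⟨U, hU, hxU, hUF⟩ := compact_exists_isClopen_in_isOpen hc.isOpen_compl hx
      have h := hq U hU (Set.singleton_subset_iff.2 hxU)
      have hy' : y ∈ ⋃ n : ℤ, ⇑(T.toEquiv ^ n) '' U := by
        rw [show _ = Set.univ from h]; trivial
      obtain ⟨n, z, hz, e⟩ := Set.mem_iUnion.1 hy'
      exact hUF hz ((inv_zpow_aux T F hi n z).1 (e ▸ hy))
    have key2 : ∀ M : Set X, IsMinimalSet T M → x₀ ∈ M := fun M hM =>
      key M hM.1 hM.2.1 ((inv_iff_aux T M).1 hM.2.2.1)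
    refine ⟨?_, key2⟩
    obtain ⟨M, -, hM⟩ := exists_minimal_aux T Set.univ Set.univ_nonempty isClosed_univ (by simp)
    refine ⟨M, hM, fun N hN => ?_⟩
    have hne : (M ∩ N).Nonempty := ⟨x₀, key2 M hM, key2 N hN⟩
    have hcl : IsClosed (M ∩ N) := hM.2.1.inter hN.2.1
    have hin : ⇑T '' (M ∩ N) = M ∩ N := by
      rw [Set.image_inter T.injective, hM.2.2.1, hN.2.2.1]
    rw [← hM.2.2.2 _ Set.inter_subset_left hne hcl hin]
    exact (hN.2.2.2 _ Set.inter_subset_right hne hcl hin).symm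
  · rintro ⟨-, h⟩
    refine ⟨isClosed_singleton, fun U hU hxU => ?_⟩
    by_contra hne
    have hopen : IsOpen (⋃ n : ℤ, ⇑(T.toEquiv ^ n) '' U) := by
      refine isOpen_iUnion fun n => ?_
      induction n using Int.induction_on with
      | zero => simpa using hU.isOpen
      | succ k ih =>
        rw [add_comm, zpow_add, zpow_one, Equiv.Perm.coe_mul, Set.image_comp]
        exact T.isOpenMap _ ih
      | pred k ih =>
        rw [sub_eq_add_neg, add_comm, zpow_add, zpow_neg_one, Equiv.Perm.coe_mul, Set.image_comp]
        exact T.symm.isOpenMap _ ih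
    obtain ⟨M, hMF, hM⟩ := exists_minimal_aux T (⋃ n : ℤ, ⇑(T.toEquiv ^ n) '' U)ᶜ
      (Set.nonempty_compl.2 hne) hopen.isClosed_compl (by
        intro x
        simp only [Set.mem_compl_iff, not_iff_not, Set.mem_iUnion]
        constructor
        · rintro ⟨n, z, hz, e⟩
          refine ⟨-1 + n, z, hz, ?_⟩
          rw [zpow_add, Equiv.Perm.mul_apply, e, zpow_neg_one]
          exact T.toEquiv.symm_apply_apply x
        · rintro ⟨n, z, hz, e⟩
          refine ⟨1 + n, z, hz, ?_⟩
          rw [zpow_add, Equiv.Perm.mul_apply, e, zpow_one]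
          rfl)
    exact hMF (h M hM) (Set.mem_iUnion.2 ⟨0, x₀, hxU rfl, by simp⟩)
end

section
/- Let (X,T) and (Y,S) be zero dimensional dynamical systems and let α : X → Y be a topological factoring, i.e., a continuous surjection with α ∘ T = S ∘ α. If X₀ ⊆ X is a quasi-section for (X,T), then α(X₀) is a quasi-section for (Y,S). -/
/-- Let `(X,T)` and `(Y,S)` be zero dimensional dynamical systems and `α : X → Y` a
topological factoring (continuous surjection with `α ∘ T = S ∘ α`). If `X₀` is a
quasi-section for `(X,T)` then `α(X₀)` is a quasi-section for `(Y,S)`. -/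
theorem stmt9 {X Y : Type*} [TopologicalSpace X] [CompactSpace X]
    [TopologicalSpace.MetrizableSpace X] [TotallyDisconnectedSpace X] [Nonempty X]
    [TopologicalSpace Y] [CompactSpace Y]
    [TopologicalSpace.MetrizableSpace Y] [TotallyDisconnectedSpace Y] [Nonempty Y]
    (T : X ≃ₜ X) (S : Y ≃ₜ Y) (α : X → Y)
    (hαcont : Continuous α) (hαsurj : Function.Surjective α)
    (hαequiv : α ∘ ⇑T = ⇑S ∘ α)
    (X₀ : Set X) (hX₀ : IsQuasiSection T X₀) :
    IsQuasiSection S (α '' X₀) := by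
  have h1 : ∀ x, α (T x) = S (α x) := fun x => congrFun hαequiv x
  have hpow : ∀ (n : ℕ) (x : X), α ((T.toEquiv ^ n : Equiv.Perm X) x)
      = (S.toEquiv ^ n : Equiv.Perm Y) (α x) := by
    intro n
    induction n with
    | zero => intro x; rfl
    | succ k ih =>
      intro x
      have e1 : (T.toEquiv ^ (k + 1) : Equiv.Perm X) x
          = (T.toEquiv ^ k : Equiv.Perm X) (T x) := by
        rw [pow_succ]; rfl
      have e2 : (S.toEquiv ^ (k + 1) : Equiv.Perm Y) (α x)
          = (S.toEquiv ^ k : Equiv.Perm Y) (S (α x)) := by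
        rw [pow_succ]; rfl
      rw [e1, e2, ih, h1]
  have hz : ∀ (n : ℤ) (x : X), α ((T.toEquiv ^ n : Equiv.Perm X) x)
      = (S.toEquiv ^ n : Equiv.Perm Y) (α x) := by
    intro n x
    obtain ⟨k, rfl | rfl⟩ := n.eq_nat_or_neg
    · rw [zpow_natCast, zpow_natCast]; exact hpow k x
    · rw [zpow_neg, zpow_neg, zpow_natCast, zpow_natCast, Equiv.Perm.eq_inv_iff_eq, ← hpow]
      exact congrArg α (Equiv.apply_symm_apply (T.toEquiv ^ k : Equiv.Perm X) x)
  refine ⟨(hX₀.1.isCompact.image hαcont).isClosed, fun U hU hsub => ?_⟩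
  have hc := hX₀.2 (α ⁻¹' U) (hU.preimage hαcont) (Set.image_subset_iff.mp hsub)
  refine Set.eq_univ_of_forall fun y => ?_
  obtain ⟨x, rfl⟩ := hαsurj y
  have hx : x ∈ ⋃ n : ℤ, ⇑(T.toEquiv ^ n) '' (α ⁻¹' U) := by
    rw [show _ = _ from hc]; trivial
  obtain ⟨n, z, hzU, rfl⟩ := Set.mem_iUnion.mp hx
  exact Set.mem_iUnion.mpr ⟨n, α z, hzU, (hz n z).symm⟩
end

section
/- Let V₁, V₂, W₁, W₂ be finite nonempty sets and let F₁ : V₁ → W₁, F₂ : V₂ → W₂, G₂ : V₂ → W₂, E : V₁ → V₂, and S : W₁ → W₂ be ordered sets of edges. Suppose there are order isomorphisms γ : E ∘ F₂ → F₁ ∘ S and η : E ∘ G₂ → F₁ ∘ S which are compatible in the first coordinate, meaning that whenever γ(e,f) = η(e',g) for (e,f) ∈ E ∘ F₂ and (e',g) ∈ E ∘ G₂, one has e = e'. Then F₂ and G₂ are order isomorphic. -/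
/-- The reverse lexicographic order on pairs: `(t,g) ≤ (t',g')` iff `g < g'`, or `g = g'`
and `t ≤ t'`. This is the order used on compositions of ordered sets of edges. -/
def revLexLE {A B : Type*} [PartialOrder A] [PartialOrder B] (p q : A × B) : Prop :=
  p.2 < q.2 ∨ (p.2 = q.2 ∧ p.1 ≤ q.1)

/-- `(E, s, r, ≤)` is an *ordered set of edges* from `V` to `W`: the source and range maps
are surjective, and two edges are comparable (in the partial order on `E`) if and only if
they have the same range; in particular the order is total on each range fiber. -/
structure IsOrderedEdgeSet {V W E : Type*} [PartialOrder E]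
    (s : E → V) (r : E → W) : Prop where
  s_surj : Function.Surjective s
  r_surj : Function.Surjective r
  comparable_iff : ∀ e e' : E, (e ≤ e' ∨ e' ≤ e) ↔ r e = r e'

/-- The second coordinate of the image depends only on the second coordinate. -/
theorem half_aux {V₁ V₂ EF EG EE : Type*} [PartialOrder EF] [PartialOrder EG] [PartialOrder EE]
    (sF : EF → V₂) (sG : EG → V₂) (sE : EE → V₁) (rE : EE → V₂) (hE : IsOrderedEdgeSet sE rE)
    (θ : {p : EE × EF // rE p.1 = sF p.2} ≃ {p : EE × EG // rE p.1 = sG p.2})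
    (h1 : ∀ p, (θ p).val.1 = p.val.1)
    (hord : ∀ p q, revLexLE p.val q.val ↔ revLexLE (θ p).val (θ q).val) :
    ∃ φ : EF → EG, (∀ p, (θ p).val.2 = φ p.val.2) ∧ (∀ f, sG (φ f) = sF f) ∧
      ∀ f f', f ≤ f' → φ f ≤ φ f' := by
  have key : ∀ p q : {p : EE × EF // rE p.1 = sF p.2}, p.val.2 = q.val.2 →
      p.val.1 ≤ q.val.1 → (θ p).val.2 = (θ q).val.2 := by
    intro p q h2 hle
    rcases (hord p q).1 (Or.inr ⟨h2, hle⟩) with hlt | ⟨h, -⟩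
    · exfalso
      have hm : rE q.val.1 = sG (θ p).val.2 := by
        rw [← (θ p).2, h1, q.2, p.2, h2]
      obtain ⟨m, hm'⟩ := θ.surjective ⟨(q.val.1, (θ p).val.2), hm⟩
      have hm1 : m.val.1 = q.val.1 := by rw [← h1 m, hm']
      have a1 : revLexLE p.val m.val := by
        rw [hord, hm']
        exact Or.inr ⟨rfl, by rw [h1]; exact hle⟩
      have a2 : revLexLE m.val q.val := by
        rw [hord, hm']
        exact Or.inl hlt
      have hmq : m.val.2 = q.val.2 := by
        apply le_antisymm
        · rcases a2 with h | ⟨h, -⟩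
          · exact h.le
          · exact h.le
        · rw [← h2]
          rcases a1 with h | ⟨h, -⟩
          · exact h.le
          · exact h.le
      have : m = q := Subtype.ext (Prod.ext hm1 hmq)
      rw [← this, hm'] at hlt
      exact lt_irrefl _ hlt
    · exact h
  have key2 : ∀ p q : {p : EE × EF // rE p.1 = sF p.2}, p.val.2 = q.val.2 →
      (θ p).val.2 = (θ q).val.2 := by
    intro p q h2
    rcases (hE.comparable_iff p.val.1 q.val.1).2 (by rw [p.2, q.2, h2]) with h | h
    · exact key p q h2 h
    · exact (key q p h2.symm h).symm
  choose c hc using fun f : EF => hE.r_surj (sF f)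
  refine ⟨fun f => (θ ⟨(c f, f), hc f⟩).val.2, fun p => key2 _ _ rfl, fun f => ?_, ?_⟩
  · rw [← (θ ⟨(c f, f), hc f⟩).2, h1]
    exact hc f
  · intro f f' hff
    rcases hff.eq_or_lt with rfl | hlt
    · exact le_rfl
    · rcases (hord ⟨(c f, f), hc f⟩ ⟨(c f', f'), hc f'⟩).1 (Or.inl hlt) with h | ⟨h, -⟩
      · exact h.le
      · exact h.le

/-- Let `F₁ : V₁ → W₁`, `F₂, G₂ : V₂ → W₂`, `E : V₁ → V₂` and `S : W₁ → W₂` be ordered sets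
of edges, and let `γ : E ∘ F₂ → F₁ ∘ S` and `η : E ∘ G₂ → F₁ ∘ S` be order isomorphisms
(bijections preserving source, range, and order in both directions, where the compositions
carry the reverse lexicographic order) which are compatible in the first coordinate:
`γ(e,f) = η(e',g)` implies `e = e'`. Then `F₂ ≅ G₂`, i.e. there is a bijection `φ`
from the edges of `F₂` to the edges of `G₂` preserving sources, ranges, and the order in
both directions. -/
theorem stmt10
    {V₁ V₂ W₁ W₂ : Type*} [Fintype V₁] [Nonempty V₁] [Fintype V₂] [Nonempty V₂]
    [Fintype W₁] [Nonempty W₁] [Fintype W₂] [Nonempty W₂]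
    {EF1 EF2 EG2 EE ES : Type*}
    [Fintype EF1] [Nonempty EF1] [PartialOrder EF1]
    [Fintype EF2] [Nonempty EF2] [PartialOrder EF2]
    [Fintype EG2] [Nonempty EG2] [PartialOrder EG2]
    [Fintype EE] [Nonempty EE] [PartialOrder EE]
    [Fintype ES] [Nonempty ES] [PartialOrder ES]
    (sF1 : EF1 → V₁) (rF1 : EF1 → W₁) (hF1 : IsOrderedEdgeSet sF1 rF1)
    (sF2 : EF2 → V₂) (rF2 : EF2 → W₂) (hF2 : IsOrderedEdgeSet sF2 rF2)
    (sG2 : EG2 → V₂) (rG2 : EG2 → W₂) (hG2 : IsOrderedEdgeSet sG2 rG2)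
    (sE : EE → V₁) (rE : EE → V₂) (hE : IsOrderedEdgeSet sE rE)
    (sS : ES → W₁) (rS : ES → W₂) (hS : IsOrderedEdgeSet sS rS)
    -- `γ : E ∘ F₂ → F₁ ∘ S` and `η : E ∘ G₂ → F₁ ∘ S`
    (γ : {p : EE × EF2 // rE p.1 = sF2 p.2} → {p : EF1 × ES // rF1 p.1 = sS p.2})
    (η : {p : EE × EG2 // rE p.1 = sG2 p.2} → {p : EF1 × ES // rF1 p.1 = sS p.2})
    (hγbij : Function.Bijective γ) (hηbij : Function.Bijective η)
    -- `γ` and `η` intertwine sources and ranges of the compositions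
    (hγs : ∀ p, sF1 (γ p).val.1 = sE p.val.1)
    (hγr : ∀ p, rS (γ p).val.2 = rF2 p.val.2)
    (hηs : ∀ p, sF1 (η p).val.1 = sE p.val.1)
    (hηr : ∀ p, rS (η p).val.2 = rG2 p.val.2)
    -- `γ` and `η` preserve the reverse lexicographic order in both directions
    (hγord : ∀ p q, revLexLE p.val q.val ↔ revLexLE (γ p).val (γ q).val)
    (hηord : ∀ p q, revLexLE p.val q.val ↔ revLexLE (η p).val (η q).val)
    -- compatibility in the first coordinate
    (hcompat : ∀ p q, γ p = η q → p.val.1 = q.val.1) :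
    ∃ φ : EF2 ≃ EG2, (∀ e, sG2 (φ e) = sF2 e) ∧ (∀ e, rG2 (φ e) = rF2 e) ∧
      ∀ e e', e ≤ e' ↔ φ e ≤ φ e' := by
  let g := Equiv.ofBijective γ hγbij
  let h := Equiv.ofBijective η hηbij
  let θ := g.trans h.symm
  have hθ : ∀ p, η (θ p) = γ p := fun p => h.apply_symm_apply (γ p)
  have h1 : ∀ p, (θ p).val.1 = p.val.1 := fun p => (hcompat p (θ p) (hθ p).symm).symm
  have hord : ∀ p q, revLexLE p.val q.val ↔ revLexLE (θ p).val (θ q).val := by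
    intro p q
    rw [hγord, hηord, hθ, hθ]
  have h1' : ∀ p, (θ.symm p).val.1 = p.val.1 := by
    intro p
    rw [← h1 (θ.symm p), θ.apply_symm_apply]
  have hord' : ∀ p q, revLexLE p.val q.val ↔ revLexLE (θ.symm p).val (θ.symm q).val := by
    intro p q
    rw [hord, θ.apply_symm_apply, θ.apply_symm_apply]
  obtain ⟨φ, a, as, am⟩ := half_aux sF2 sG2 sE rE hE θ h1 hord
  obtain ⟨ψ, b, bs, bm⟩ := half_aux sG2 sF2 sE rE hE θ.symm h1' hord'
  have l : ∀ f, ψ (φ f) = f := by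
    intro f
    obtain ⟨e, he⟩ := hE.r_surj (sF2 f)
    have := b (θ ⟨(e, f), he⟩)
    rw [θ.symm_apply_apply, a] at this
    exact this.symm
  have r : ∀ f, φ (ψ f) = f := by
    intro f
    obtain ⟨e, he⟩ := hE.r_surj (sG2 f)
    have := a (θ.symm ⟨(e, f), he⟩)
    rw [θ.apply_symm_apply, b] at this
    exact this.symm
  refine ⟨⟨φ, ψ, l, r⟩, as, fun f => ?_, fun f f' => ⟨am f f', fun hh => ?_⟩⟩
  · obtain ⟨e, he⟩ := hE.r_surj (sF2 f)
    have := hηr (θ ⟨(e, f), he⟩)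
    rw [hθ, hγr, a] at this
    exact this.symm
  · have := bm _ _ hh
    simpa [l] using this
end
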